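/- arXiv:2007.08317 — 9 statements merged into one kernel-verified Lean document; each statement's English description precedes it below -/
import Mathlib

section
/- For every positive integer n, the least natural number m such that n can be written as the XOR (bitwise exclusive-or fold) of a list of m natural numbers, each of the form 2^v − 1 with v ≥ 1, equals c(n), the number of runs in the binary expansion of n. (This is the arithmetic form of the paper's Proposition 1: the minimal number of masque operations of type A needed to transform a binary word beginning with 1 into the all-zero word equals the number of runs in the word, XOR with 2^v − 1 being the operation that flips bit positions 0,…,v−1.) -/
/-!
Say that `n` changes at `i` if its binary digits at `i` and `i + 1` differ, so that `runs n` counts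
the changes of `n`. Taking changes is additive for XOR (a change of `a ^^^ b` is a change of exactly
one of `a`, `b`), and `2 ^ v - 1` with `v ≥ 1` changes exactly at `v - 1`. Hence an XOR of `m` such
numbers has at most `m` changes (`exists_finset_changes`), which is the lower bound. For the upper
bound, the XOR of the numbers `2 ^ (i + 1) - 1` over the changes `i` of `n` has the same changes as
`n` (`change_foldr`), and a natural number is determined by its changes, as its digits are
eventually `0` (`eq_of_change_eq`).
-/

/-- `runs n` is the number of runs (maximal blocks of equal consecutive digits) in the binary
expansion of `n`: the number of indices `i` at which the `i`-th and `(i+1)`-th binary digits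
of `n` differ. -/
def runs (n : ℕ) : ℕ :=
  ((Finset.range (n + 1)).filter fun i => n.testBit i ≠ n.testBit (i + 1)).card

/-- `change n i` says whether the binary digits of `n` at `i` and `i + 1` differ, as a `Bool` so that
additivity for XOR is an equation. -/
def change (n i : ℕ) : Bool := n.testBit i ^^ n.testBit (i + 1)

theorem change_xor (a b i : ℕ) : change (a ^^^ b) i = (change a i ^^ change b i) := by
  unfold change
  rw [Nat.testBit_xor, Nat.testBit_xor]
  cases a.testBit i <;> cases b.testBit i <;> cases a.testBit (i + 1) <;>
    cases b.testBit (i + 1) <;> rfl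

theorem change_two_pow_sub_one (j i : ℕ) : change (2 ^ (j + 1) - 1) i = decide (i = j) := by
  unfold change
  rw [Nat.testBit_two_pow_sub_one, Nat.testBit_two_pow_sub_one]
  rcases lt_trichotomy i j with h | h | h
  · simp [h, h.ne, Nat.lt_succ_of_lt h]
  · simp [h]
  · have h1 : ¬ i < j + 1 := by omega
    have h2 : ¬ i < j := by omega
    simp [h1, h2, h.ne']

theorem change_eq_true_iff (n i : ℕ) :
    change n i = true ↔ n.testBit i ≠ n.testBit (i + 1) := by
  simp [change]

theorem eq_of_change_eq {a b : ℕ} (h : ∀ i, change a i = change b i) : a = b := by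
  -- `a ^^^ b` has no change, so all its digits agree with its high digits, which vanish.
  have hstep : ∀ i, (a ^^^ b).testBit i = (a ^^^ b).testBit (i + 1) := by
    intro i
    have h0 : change (a ^^^ b) i = false := by rw [change_xor, h i, Bool.xor_self]
    simpa only [change, bne_eq_false_iff_eq] using h0
  have hadd : ∀ i k, (a ^^^ b).testBit i = (a ^^^ b).testBit (i + k) := by
    intro i k
    induction k with
    | zero => rfl
    | succ k ih => rw [ih, hstep (i + k)]; rfl
  rw [← Nat.xor_eq_zero_iff]
  apply Nat.eq_of_testBit_eq
  intro i
  rw [hadd i (a ^^^ b), Nat.zero_testBit]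
  apply Nat.testBit_lt_two_pow
  exact (Nat.lt_two_pow_self).trans_le (Nat.pow_le_pow_right two_pos (by omega))

theorem exists_finset_changes (l : List ℕ) (hl : ∀ x ∈ l, ∃ v : ℕ, 1 ≤ v ∧ x = 2 ^ v - 1) :
    ∃ S : Finset ℕ, S.card ≤ l.length ∧
      ∀ i, change (l.foldr (· ^^^ ·) 0) i = true → i ∈ S := by
  induction l with
  | nil => exact ⟨∅, by simp, by simp [change]⟩
  | cons x l ih =>
    obtain ⟨S, hS, hmem⟩ := ih fun y hy => hl y (List.mem_cons_of_mem _ hy)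
    obtain ⟨v, hv, rfl⟩ := hl x List.mem_cons_self
    obtain ⟨j, rfl⟩ := Nat.exists_eq_add_of_le' hv
    refine ⟨insert j S, (Finset.card_insert_le _ _).trans (by simpa using hS), fun i hi => ?_⟩
    rw [List.foldr_cons, change_xor, change_two_pow_sub_one] at hi
    rw [Finset.mem_insert]
    by_cases hij : i = j
    · exact Or.inl hij
    · exact Or.inr (hmem i (by simpa [hij] using hi))

theorem change_foldr (L : List ℕ) (hL : L.Nodup) (i : ℕ) :
    change ((L.map fun j => 2 ^ (j + 1) - 1).foldr (· ^^^ ·) 0) i = decide (i ∈ L) := by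
  induction L with
  | nil => simp [change]
  | cons j L ih =>
    rw [List.nodup_cons] at hL
    rw [List.map_cons, List.foldr_cons, change_xor, change_two_pow_sub_one, ih hL.2]
    by_cases hij : i = j
    · subst hij
      simp [hL.1]
    · simp [hij]

/-- The cut-off `i < n + 1` in the definition of `runs` loses no change. -/
theorem mem_filter_range_iff (n i : ℕ) :
    i ∈ (Finset.range (n + 1)).filter (fun i => n.testBit i ≠ n.testBit (i + 1)) ↔
      change n i = true := by
  rw [Finset.mem_filter, change_eq_true_iff, Finset.mem_range, and_iff_right_iff_imp]
  intro h
  by_contra hi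
  have hz : ∀ k, n ≤ k → n.testBit k = false := fun k hk =>
    Nat.testBit_lt_two_pow (Nat.lt_two_pow_self.trans_le (Nat.pow_le_pow_right two_pos hk))
  exact h ((hz i (by omega)).trans (hz (i + 1) (by omega)).symm)

/-- Arithmetic form of the paper's Proposition 1: for `n ≥ 1`, the least `m` such that `n` is
the XOR of a list of `m` numbers, each of the form `2 ^ v - 1` with `v ≥ 1`, equals the number
of runs in the binary expansion of `n`. -/
theorem min_typeA_masques_eq_runs (n : ℕ) (hn : 0 < n) :
    sInf {m : ℕ | ∃ l : List ℕ, l.length = m ∧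
        (∀ x ∈ l, ∃ v : ℕ, 1 ≤ v ∧ x = 2 ^ v - 1) ∧
        l.foldr (· ^^^ ·) 0 = n} = runs n := by
  refine IsLeast.csInf_eq ⟨?_, ?_⟩
  · set S := (Finset.range (n + 1)).filter (fun i => n.testBit i ≠ n.testBit (i + 1)) with hS
    refine ⟨S.toList.map fun j => 2 ^ (j + 1) - 1, ?_, ?_, ?_⟩
    · rw [List.length_map, Finset.length_toList, hS, runs]
    · intro x hx
      obtain ⟨j, -, rfl⟩ := List.mem_map.1 hx
      exact ⟨j + 1, by omega, rfl⟩
    · apply eq_of_change_eq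
      intro i
      rw [change_foldr _ S.nodup_toList, Bool.eq_iff_iff, decide_eq_true_iff, Finset.mem_toList,
        hS, mem_filter_range_iff]
  · rintro m ⟨l, rfl, hl, hfold⟩
    obtain ⟨S, hcard, hS⟩ := exists_finset_changes l hl
    rw [hfold] at hS
    exact (Finset.card_le_card fun i hi => hS i ((mem_filter_range_iff n i).1 hi)).trans hcard
end

section
/- Let n be a positive integer. If n equals the XOR (bitwise exclusive-or fold) of a list of m natural numbers, each of which is either of the form 2^v − 1 with v ≥ 1, or of the form 2^(v1+1) − 1 − 2^(v2) with v1 > v2 ≥ 0, then 3·m ≥ c(n), the number of runs in the binary expansion of n. (This is the arithmetic form of the paper's Corollary 1: at least c(n)/3 masque operations of type A or B are needed to transform the binary expansion of n into the all-zero word.) -/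
theorem masque_changes (x : ℕ) (hx : (∃ v : ℕ, 1 ≤ v ∧ x = 2 ^ v - 1) ∨
    (∃ v1 v2 : ℕ, v2 < v1 ∧ x = 2 ^ (v1 + 1) - 1 - 2 ^ v2)) :
    ∃ T : Finset ℕ, T.card ≤ 3 ∧ ∀ i ∉ T, x.testBit i = x.testBit (i + 1) := by
  rcases hx with ⟨v, hv, rfl⟩ | ⟨v1, v2, h, rfl⟩
  · refine ⟨{v - 1}, by simp, fun i hi => ?_⟩
    simp only [Finset.mem_singleton] at hi
    simp only [Nat.testBit_two_pow_sub_one, decide_eq_decide]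
    omega
  · refine ⟨{v1, v2, v2 - 1}, Finset.card_le_three, fun i hi => ?_⟩
    simp only [Finset.mem_insert, Finset.mem_singleton, not_or] at hi
    have hlt : 2 ^ v2 < 2 ^ (v1 + 1) := Nat.pow_lt_pow_right (by omega) (by omega)
    have e : 2 ^ (v1 + 1) - 1 - 2 ^ v2 = 2 ^ (v1 + 1) - (2 ^ v2 + 1) := by omega
    rw [e, Nat.testBit_two_pow_sub_succ hlt, Nat.testBit_two_pow_sub_succ hlt,
      Nat.testBit_two_pow, Nat.testBit_two_pow]
    have h1 : v2 ≠ i := by omega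
    -- For `v2 = 0` this holds since `i + 1` is positive, so the junk value of `v2 - 1` is harmless.
    have h2 : v2 ≠ i + 1 := by omega
    simp only [h1, h2, decide_false, Bool.not_false, Bool.and_true, decide_eq_decide]
    omega

theorem foldr_xor_changes (l : List ℕ)
    (hmem : ∀ x ∈ l, (∃ v : ℕ, 1 ≤ v ∧ x = 2 ^ v - 1) ∨
      (∃ v1 v2 : ℕ, v2 < v1 ∧ x = 2 ^ (v1 + 1) - 1 - 2 ^ v2)) :
    ∃ T : Finset ℕ, T.card ≤ 3 * l.length ∧ ∀ i ∉ T,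
      (l.foldr (· ^^^ ·) 0).testBit i = (l.foldr (· ^^^ ·) 0).testBit (i + 1) := by
  induction l with
  | nil => exact ⟨∅, by simp, by simp⟩
  | cons x l ih =>
    obtain ⟨T, hT, hT'⟩ := ih fun y hy => hmem y (List.mem_cons_of_mem _ hy)
    obtain ⟨U, hU, hU'⟩ := masque_changes x (hmem x List.mem_cons_self)
    refine ⟨U ∪ T, ?_, fun i hi => ?_⟩
    · have := Finset.card_union_le U T
      rw [List.length_cons]
      omega
    · rw [Finset.mem_union, not_or] at hi
      rw [List.foldr_cons, Nat.testBit_xor, Nat.testBit_xor, hU' i hi.1, hT' i hi.2]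

/-- Arithmetic form of the paper's Corollary 1: if `n ≥ 1` is the XOR of a list of `m` numbers,
each of the form `2 ^ v - 1` (`v ≥ 1`, a type-A masque) or of the form
`2 ^ (v1 + 1) - 1 - 2 ^ v2` (`v1 > v2 ≥ 0`, a type-B masque), then `3 * m ≥ runs n`. -/
theorem runs_le_three_mul_masques (n : ℕ) (hn : 0 < n) (l : List ℕ)
    (hmem : ∀ x ∈ l, (∃ v : ℕ, 1 ≤ v ∧ x = 2 ^ v - 1) ∨
      (∃ v1 v2 : ℕ, v2 < v1 ∧ x = 2 ^ (v1 + 1) - 1 - 2 ^ v2))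
    (hxor : l.foldr (· ^^^ ·) 0 = n) :
    runs n ≤ 3 * l.length := by
  obtain ⟨T, hT, hT'⟩ := foldr_xor_changes l hmem
  rw [hxor] at hT'
  refine (Finset.card_le_card fun i hi => ?_).trans hT
  by_contra hiT
  exact (Finset.mem_filter.1 hi).2 (hT' i hiT)
end

section
/- Let n1 and n2 be positive integers with n1 < n2, and suppose the finite word (ν₂(n1), ν₂(n1+1), …, ν₂(n2)) is a palindrome. Then n1 + n2 is even (equivalently, the word has odd length), and the midpoint e = (n1 + n2)/2 satisfies ν₂(e) > ν₂(i) for every integer i with n1 ≤ i ≤ n2 and i ≠ e. -/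
/-!
Between two distinct positive integers of equal 2-adic valuation `k` lies one of larger
valuation: they are `2 ^ k` times distinct odd numbers, and an even number lies strictly between
these (`exists_between_padicValNat_lt`). Hence the maximum of `ν₂` on `[n1, n2]` is attained at
exactly one integer `m`. By the palindrome property the mirror image `n1 + n2 - m` has the same
valuation, so it equals `m`; thus `n1 + n2 = 2 * m`, and `m` is the midpoint.
-/

theorem exists_between_padicValNat_lt {a b : ℕ} (ha : 0 < a) (hab : a < b)
    (h : padicValNat 2 a = padicValNat 2 b) :
    ∃ c, a < c ∧ c < b ∧ padicValNat 2 a < padicValNat 2 c := by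
  obtain ⟨k, hk⟩ : ∃ k, padicValNat 2 a = k := ⟨_, rfl⟩
  have hkb : padicValNat 2 b = k := h ▸ hk
  have hda : 2 ^ k ∣ a := hk ▸ pow_padicValNat_dvd
  have hdb : 2 ^ k ∣ b := hkb ▸ pow_padicValNat_dvd
  have hna : ¬ 2 ^ (k + 1) ∣ a := hk ▸ pow_succ_padicValNat_not_dvd ha.ne'
  have hnb : ¬ 2 ^ (k + 1) ∣ b := hkb ▸ pow_succ_padicValNat_not_dvd (ha.trans hab).ne'
  obtain ⟨x, rfl⟩ := hda
  obtain ⟨y, rfl⟩ := hdb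
  have hp : 0 < 2 ^ k := by positivity
  rw [pow_succ, Nat.mul_dvd_mul_iff_left hp] at hna hnb
  have hxy : x < y := Nat.lt_of_mul_lt_mul_left hab
  refine ⟨2 ^ k * (x + 1), Nat.mul_lt_mul_of_pos_left (by omega) hp,
    Nat.mul_lt_mul_of_pos_left (by omega) hp, ?_⟩
  rw [hk, ← Nat.succ_le_iff, ← padicValNat_dvd_iff_le (by positivity), Nat.succ_eq_add_one,
    pow_succ, Nat.mul_dvd_mul_iff_left hp]
  omega


/-- The paper's Lemma 2: if `n1 < n2` are positive and the word
`(ν₂(n1), ν₂(n1+1), …, ν₂(n2))` of 2-adic valuations is a palindrome, then `n1 + n2` is even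
(equivalently, the word has odd length) and the midpoint `e = (n1 + n2) / 2` satisfies
`ν₂(e) > ν₂(i)` for every `i ∈ [n1, n2]` with `i ≠ e`. -/
theorem ruler_palindrome_midpoint (n1 n2 : ℕ) (h1 : 0 < n1) (h12 : n1 < n2)
    (hpal : ((List.range (n2 - n1 + 1)).map fun t => padicValNat 2 (n1 + t)).Palindrome) :
    2 ∣ (n1 + n2) ∧
      ∀ i : ℕ, n1 ≤ i → i ≤ n2 → i ≠ (n1 + n2) / 2 →
        padicValNat 2 i < padicValNat 2 ((n1 + n2) / 2) := by
  have hsymm : ∀ i, n1 ≤ i → i ≤ n2 → padicValNat 2 (n1 + n2 - i) = padicValNat 2 i := by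
    intro i hi1 hi2
    have hget := congrArg (fun l : List ℕ => l[i - n1]?) hpal.reverse_eq
    have hlt : i - n1 < n2 - n1 + 1 := by omega
    rw [List.getElem?_reverse (by simpa using hlt)] at hget
    simp only [List.length_map, List.length_range, List.getElem?_map] at hget
    rw [List.getElem?_range (by omega), List.getElem?_range hlt] at hget
    simp only [Option.map_some, Option.some.injEq] at hget
    rwa [show n1 + (n2 - n1 + 1 - 1 - (i - n1)) = n1 + n2 - i by omega,
      show n1 + (i - n1) = i by omega] at hget
  obtain ⟨m, hm, hmax⟩ := Finset.exists_max_image (Finset.Icc n1 n2) (padicValNat 2)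
    ⟨n1, Finset.mem_Icc.2 ⟨le_rfl, h12.le⟩⟩
  simp only [Finset.mem_Icc] at hm hmax
  have huniq : ∀ i, n1 ≤ i → i ≤ n2 → padicValNat 2 i = padicValNat 2 m → i = m := by
    intro i hi1 hi2 hi
    rcases lt_trichotomy i m with hlt | heq | hgt
    · obtain ⟨c, hc1, hc2, hc⟩ := exists_between_padicValNat_lt (by omega) hlt hi
      have := hmax c ⟨by omega, by omega⟩
      omega
    · exact heq
    · obtain ⟨c, hc1, hc2, hc⟩ := exists_between_padicValNat_lt (by omega) hgt hi.symm
      have := hmax c ⟨by omega, by omega⟩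
      omega
  have hmid := huniq (n1 + n2 - m) (by omega) (by omega) (hsymm m hm.1 hm.2)
  have he : (n1 + n2) / 2 = m := by omega
  refine ⟨by omega, fun i hi1 hi2 hne => ?_⟩
  rw [he] at hne ⊢
  exact lt_of_le_of_ne (hmax i ⟨hi1, hi2⟩) fun h => hne (huniq i hi1 hi2 h)
end

section
/- Let n and n' be positive integers with n' ≤ n. The finite word (ν₂(n'), ν₂(n'+1), …, ν₂(n)) is a palindrome if and only if there exists a natural number v such that the v-th binary digit of n equals 1 and n' − 1 = n XOR (2^(v+1) − 1). (This is the arithmetic form of the paper's Proposition 2: the palindromic suffix-factors of the ruler sequence ending at position n are exactly those obtained by applying a type-A masque operation to the binary expansion of n at a position where n has digit 1.) -/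
/-!
Write `n = c + r` with `c` an odd multiple of `2 ^ v` and `r < 2 ^ v`, which is possible exactly
when `n` has digit `1` at position `v`. Then `n ^^^ (2 ^ (v + 1) - 1) = c - r - 1`
(`typeA_iff_center`), so the right-hand side says that the interval `[n', n]` is symmetric about
such a centre `c`, with radius `r < 2 ^ v`.

If this holds, `c + s` and `c - s` are divisible by the same powers of two for `s < 2 ^ v`
(`padicValNat_reflect`), so the word is a palindrome. Conversely, let `m` maximise `ν₂` on
`[n', n]`, with value `v`. The number `m + 2 ^ v` has larger valuation, hence exceeds `n`;
as multiples of `2 ^ v` are spaced by `2 ^ v`, the maximiser is unique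
(`eq_of_padicValNat_maximal`). The reflection of the palindrome fixes it, so `m` is the centre.
-/

/-- Complementing the `v + 1` low digits of `n` sends the residue `b` of `n` modulo
`2 ^ (v + 1)` to `2 ^ (v + 1) - 1 - b`. -/
lemma xor_mask (a b v : ℕ) (hb : b < 2 ^ (v + 1)) :
    (2 ^ (v + 1) * a + b) ^^^ (2 ^ (v + 1) - 1) = 2 ^ (v + 1) * a + (2 ^ (v + 1) - (b + 1)) := by
  apply Nat.eq_of_testBit_eq
  intro i
  have h : 2 ^ (v + 1) - (b + 1) < 2 ^ (v + 1) := by omega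
  rw [Nat.testBit_xor, Nat.testBit_two_pow_mul_add a hb, Nat.testBit_two_pow_mul_add a h,
    Nat.testBit_two_pow_sub_one, Nat.testBit_two_pow_sub_succ hb]
  by_cases hi : i < v + 1 <;> simp [hi]

/-- The type-A condition says that `[n', n]` is centred at an odd multiple of `2 ^ v` and has
radius less than `2 ^ v`. -/
lemma typeA_iff_center (n n' v : ℕ) (h1 : 0 < n') :
    (n.testBit v = true ∧ n' - 1 = n ^^^ (2 ^ (v + 1) - 1)) ↔
      ∃ a r, r < 2 ^ v ∧ n = 2 ^ v * (2 * a + 1) + r ∧ n' + r = 2 ^ v * (2 * a + 1) := by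
  have e (a : ℕ) : 2 ^ v * (2 * a + 1) = 2 ^ (v + 1) * a + 2 ^ v := by ring
  have e2 : 2 ^ (v + 1) = 2 * 2 ^ v := by ring
  have mask (a r : ℕ) (hr : r < 2 ^ v) : (2 ^ v * (2 * a + 1) + r) ^^^ (2 ^ (v + 1) - 1)
      = 2 ^ (v + 1) * a + (2 ^ (v + 1) - (2 ^ v + r + 1)) := by
    rw [e, add_assoc]
    exact xor_mask a (2 ^ v + r) v (by omega)
  constructor
  · rintro ⟨hbit, hx⟩
    rw [Nat.testBit_eq_decide_div_mod_eq, decide_eq_true_eq] at hbit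
    have hr : n % 2 ^ v < 2 ^ v := Nat.mod_lt _ (by positivity)
    have hq : 2 * (n / 2 ^ v / 2) + 1 = n / 2 ^ v := by omega
    have hn : n = 2 ^ v * (2 * (n / 2 ^ v / 2) + 1) + n % 2 ^ v := by
      rw [hq, Nat.div_add_mod]
    refine ⟨n / 2 ^ v / 2, n % 2 ^ v, hr, hn, ?_⟩
    have hm := mask (n / 2 ^ v / 2) (n % 2 ^ v) hr
    rw [← hn] at hm
    rw [hm] at hx
    rw [e]
    omega
  · rintro ⟨a, r, hr, hn, hn'⟩
    have hm := mask a r hr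
    rw [← hn] at hm
    rw [hm]
    refine ⟨?_, ?_⟩
    · rw [Nat.testBit_eq_decide_div_mod_eq, decide_eq_true_eq, hn,
        Nat.mul_add_div (by positivity), Nat.div_eq_of_lt hr]
      omega
    · rw [e] at hn'
      omega

/-- Two numbers `x`, `y` symmetric about a multiple `c` of `2 ^ v`, at distance less than `2 ^ v`,
have the same 2-adic valuation. -/
lemma padicValNat_reflect (c v s x y : ℕ) (hc : 2 ^ v ∣ c) (hs : s < 2 ^ v)
    (hx : x = c + s) (hy : y + s = c) (hy0 : 0 < y) :
    padicValNat 2 x = padicValNat 2 y := by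
  rcases Nat.eq_zero_or_pos s with rfl | hs0
  · congr 1; omega
  have key : ∀ j, 2 ^ j ∣ x ↔ 2 ^ j ∣ y := by
    intro j
    rcases le_total j v with hj | hj
    · have hjc : 2 ^ j ∣ c := (pow_dvd_pow 2 hj).trans hc
      rw [hx, Nat.dvd_add_right hjc]
      rw [← hy] at hjc
      exact ⟨fun h => (Nat.dvd_add_left h).1 hjc, fun h => (Nat.dvd_add_right h).1 hjc⟩
    · -- for `v ≤ j` both sides are false, since either would give `2 ^ v ∣ s`
      have hns : ¬ 2 ^ v ∣ s := Nat.not_dvd_of_pos_of_lt hs0 hs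
      have hd : 2 ^ v ∣ 2 ^ j := pow_dvd_pow 2 hj
      constructor
      · intro h
        rw [hx] at h
        exact absurd ((Nat.dvd_add_right hc).1 (hd.trans h)) hns
      · intro h
        exact absurd ((Nat.dvd_add_right (hd.trans h)).1 (hy ▸ hc)) hns
  have hx0 : x ≠ 0 := by omega
  apply le_antisymm
  · exact (padicValNat_dvd_iff_le hy0.ne').1 ((key _).1 pow_padicValNat_dvd)
  · exact (padicValNat_dvd_iff_le hx0).1 ((key _).2 pow_padicValNat_dvd)

lemma exists_odd_mul (m : ℕ) (hm : 0 < m) : ∃ a, m = 2 ^ padicValNat 2 m * (2 * a + 1) := by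
  obtain ⟨q, hq⟩ : 2 ^ padicValNat 2 m ∣ m := pow_padicValNat_dvd
  rcases Nat.even_or_odd' q with ⟨a, rfl | rfl⟩
  · have h : 2 ^ (padicValNat 2 m + 1) ∣ m := ⟨a, by rw [pow_succ, mul_assoc]; exact hq⟩
    have := (padicValNat_dvd_iff_le hm.ne').1 h
    omega
  · exact ⟨a, hq⟩

/-- Adding `2 ^ ν₂(m)` to `m` increases the valuation, so it leaves any interval on which `m`
maximises `ν₂`. -/
lemma lt_add_of_padicValNat_maximal (n n' m : ℕ) (h1 : 0 < n') (hm : n' ≤ m)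
    (hmax : ∀ k, n' ≤ k → k ≤ n → padicValNat 2 k ≤ padicValNat 2 m) :
    n < m + 2 ^ padicValNat 2 m := by
  by_contra! hle
  obtain ⟨a, ha⟩ := exists_odd_mul m (by omega)
  have hd : 2 ^ (padicValNat 2 m + 1) ∣ m + 2 ^ padicValNat 2 m := by
    refine ⟨a + 1, ?_⟩
    conv_lhs => enter [1]; rw [ha]
    ring
  have h := (padicValNat_dvd_iff_le (by omega)).1 hd
  have := hmax (m + 2 ^ padicValNat 2 m) (by omega) hle
  omega

/-- On an interval of positive integers there is no second maximiser of `ν₂` above a given one. -/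
lemma eq_of_padicValNat_maximal (n n' m k : ℕ) (h1 : 0 < n') (hm : n' ≤ m)
    (hmax : ∀ k, n' ≤ k → k ≤ n → padicValNat 2 k ≤ padicValNat 2 m)
    (hmk : m ≤ k) (hk : k ≤ n) (heq : padicValNat 2 k = padicValNat 2 m) : m = k := by
  by_contra hne
  have hlt := lt_add_of_padicValNat_maximal n n' m h1 hm hmax
  have hkd : 2 ^ padicValNat 2 m ∣ k := heq ▸ pow_padicValNat_dvd
  have hd : 2 ^ padicValNat 2 m ∣ k - m := Nat.dvd_sub hkd pow_padicValNat_dvd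
  have := Nat.le_of_dvd (by omega) hd
  omega

lemma palindrome_iff_reflect (f : ℕ → ℕ) (n n' : ℕ) (h2 : n' ≤ n) :
    ((List.range (n - n' + 1)).map fun t => f (n' + t)).Palindrome ↔
      ∀ k, n' ≤ k → k ≤ n → f k = f (n + n' - k) := by
  rw [List.Palindrome.iff_reverse_eq]
  constructor
  · intro h k hk1 hk2
    have h3 := congrArg (fun l => l[k - n']?) h
    rw [List.getElem?_reverse (by simp; omega)] at h3
    simp only [List.length_map, List.length_range, List.getElem?_map] at h3
    rw [List.getElem?_range (by omega), List.getElem?_range (by omega)] at h3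
    simp only [Option.map_some, Option.some.injEq] at h3
    convert h3.symm using 2 <;> omega
  · intro h
    apply List.ext_getElem (by simp)
    intro i hi hi'
    simp only [List.length_map, List.length_range] at hi'
    simp only [List.getElem_reverse, List.getElem_map, List.getElem_range, List.length_map,
      List.length_range]
    rw [h (n' + i) (by omega) (by omega)]
    congr 1
    omega

/-- Arithmetic form of the paper's Proposition 2: for `1 ≤ n' ≤ n`, the word
`(ν₂(n'), …, ν₂(n))` is a palindrome iff there is a bit position `v` at which `n` has
binary digit `1` such that `n' - 1 = n XOR (2 ^ (v + 1) - 1)`, i.e. `n' - 1` is obtained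
from `n` by a type-A masque operation at a position where `n` has digit `1`. -/
theorem ruler_palindrome_iff_typeA (n n' : ℕ) (h1 : 0 < n') (h2 : n' ≤ n) :
    ((List.range (n - n' + 1)).map fun t => padicValNat 2 (n' + t)).Palindrome ↔
      ∃ v : ℕ, n.testBit v = true ∧ n' - 1 = n ^^^ (2 ^ (v + 1) - 1) := by
  rw [palindrome_iff_reflect (padicValNat 2) n n' h2]
  simp only [typeA_iff_center n n' _ h1]
  constructor
  · intro hp
    obtain ⟨m, hm, hmax⟩ := Finset.exists_max_image (Finset.Icc n' n) (padicValNat 2)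
      ⟨n, Finset.mem_Icc.2 ⟨h2, le_rfl⟩⟩
    rw [Finset.mem_Icc] at hm
    replace hmax : ∀ k, n' ≤ k → k ≤ n → padicValNat 2 k ≤ padicValNat 2 m :=
      fun k hk hk' => hmax k (Finset.mem_Icc.2 ⟨hk, hk'⟩)
    have hpm := hp m hm.1 hm.2
    have hcenter : n + n' = 2 * m := by
      rcases le_total m (n + n' - m) with hle | hle
      · have := eq_of_padicValNat_maximal n n' m (n + n' - m) h1 hm.1 hmax hle (by omega) hpm.symm
        omega
      · have := eq_of_padicValNat_maximal n n' (n + n' - m) m h1 (by omega)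
          (fun k hk hk' => hpm ▸ hmax k hk hk') hle hm.2 hpm
        omega
    have hlt := lt_add_of_padicValNat_maximal n n' m h1 hm.1 hmax
    obtain ⟨a, ha⟩ := exists_odd_mul m (by omega)
    refine ⟨padicValNat 2 m, a, n - m, by omega, ?_, ?_⟩ <;> rw [← ha] <;> omega
  · rintro ⟨v, a, r, hr, hn, hn'⟩ k hk hk'
    have hc : 2 ^ v ∣ 2 ^ v * (2 * a + 1) := Dvd.intro _ rfl
    generalize 2 ^ v * (2 * a + 1) = c at hn hn' hc
    rcases le_total c k with hle | hle
    · exact padicValNat_reflect c v (k - c) k (n + n' - k) hc (by omega) (by omega) (by omega)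
        (by omega)
    · exact (padicValNat_reflect c v (c - k) (n + n' - k) k hc (by omega) (by omega) (by omega)
        (by omega)).symm
end

section
/- For every positive integer n, the palindromic length of the finite word (ν₂(1), ν₂(2), …, ν₂(n)) — the prefix of length n of the ruler sequence — equals c(n), the number of runs in the binary expansion of n. -/
/-- The palindromic length of a finite word `w`: the least `k` such that `w` is the
concatenation of `k` nonempty palindromes (the empty word has palindromic length `0`). -/
noncomputable def palLen (w : List ℕ) : ℕ :=
  sInf {k : ℕ | ∃ l : List (List ℕ), l.length = k ∧
    (∀ p ∈ l, p ≠ [] ∧ p.Palindrome) ∧ l.flatten = w}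

/-- Positions at which consecutive binary digits of `n` differ, searched below a bound `N`. -/
def changes (N n : ℕ) : Finset ℕ :=
  (Finset.range N).filter fun i => n.testBit i ≠ n.testBit (i + 1)

/-- Any bound `N > n` catches every change of digit, as the digits vanish from index `n` on. -/
lemma runs_eq_card_changes {n N : ℕ} (h : n < N) : runs n = (changes N n).card := by
  unfold runs changes
  congr 1
  ext i
  simp only [Finset.mem_filter, Finset.mem_range]
  refine and_congr_left fun hne => ⟨fun hi => by omega, fun _ => ?_⟩
  by_contra hi
  apply hne
  rw [Nat.testBit_lt_two_pow, Nat.testBit_lt_two_pow]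
  · exact (show n < i + 1 by omega).trans Nat.lt_two_pow_self
  · exact (show n < i by omega).trans Nat.lt_two_pow_self

/-- The two numbers agree from bit `k` on and have complementary bits below. -/
lemma testBit_flip {k s x : ℕ} (hx : x < 2 ^ k) (j : ℕ) :
    (2 ^ k * s + (2 ^ k - (x + 1))).testBit j =
      if j < k then !(2 ^ k * s + x).testBit j else (2 ^ k * s + x).testBit j := by
  rw [Nat.testBit_two_pow_mul_add _ (by omega), Nat.testBit_two_pow_mul_add _ hx,
    Nat.testBit_two_pow_sub_succ hx]
  split_ifs <;> simp_all

/-- Complementing the `v + 1` lowest bits toggles only the change of digit between bits `v`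
and `v + 1`. -/
lemma runs_le_runs_add_one {v s x : ℕ} (hx : x < 2 ^ (v + 1)) :
    runs (2 ^ (v + 1) * s + x) ≤ runs (2 ^ (v + 1) * s + (2 ^ (v + 1) - (x + 1))) + 1 := by
  have hflip := testBit_flip (s := s) hx
  set n := 2 ^ (v + 1) * s + x
  set i := 2 ^ (v + 1) * s + (2 ^ (v + 1) - (x + 1))
  rw [runs_eq_card_changes (show n < n + i + 1 by omega),
    runs_eq_card_changes (show i < n + i + 1 by omega)]
  refine le_trans (Finset.card_le_card (t := insert v (changes (n + i + 1) i)) ?_)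
    (Finset.card_insert_le _ _)
  intro j hj
  simp only [changes, Finset.mem_insert, Finset.mem_filter, Finset.mem_range] at hj ⊢
  by_cases hjv : j = v
  · exact Or.inl hjv
  · refine Or.inr ⟨hj.1, ?_⟩
    rw [hflip, hflip]
    rcases Nat.lt_or_gt_of_ne hjv with h | h
    · rw [if_pos (by omega), if_pos (by omega)]
      simpa using hj.2
    · rw [if_neg (by omega), if_neg (by omega)]
      exact hj.2

/-- Complementing all digits of `n > 0` destroys the change above the leading digit. -/
lemma runs_complement {v n : ℕ} (h1 : 2 ^ v ≤ n) (h2 : n < 2 ^ (v + 1)) :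
    runs n = runs (2 ^ (v + 1) - (n + 1)) + 1 := by
  apply le_antisymm
  · simpa using runs_le_runs_add_one (s := 0) h2
  have hflip := testBit_flip (s := 0) h2
  simp only [mul_zero, zero_add] at hflip
  have hp : 2 ^ (v + 1) = 2 * 2 ^ v := by ring
  have hin : 2 ^ (v + 1) - (n + 1) < n + 1 := by omega
  have htop : n.testBit (v + 1) = false := Nat.testBit_lt_two_pow h2
  have hlead : n.testBit v = true := by
    rw [Nat.testBit_eq_decide_div_mod_eq, Nat.div_eq_of_lt_le (k := 1) (by omega) (by omega)]
    rfl
  rw [runs_eq_card_changes hin, runs_eq_card_changes (Nat.lt_succ_self n)]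
  set i := 2 ^ (v + 1) - (n + 1)
  have hv : v ∉ changes (n + 1) i := by
    simp [changes, hflip, htop, hlead]
  rw [← Finset.card_insert_of_notMem hv]
  apply Finset.card_le_card
  intro j hj
  simp only [changes, Finset.mem_insert, Finset.mem_filter, Finset.mem_range] at hj ⊢
  rcases hj with rfl | ⟨hj, hne⟩
  · have : j < 2 ^ j := Nat.lt_two_pow_self
    exact ⟨by omega, by simp [htop, hlead]⟩
  · refine ⟨hj, ?_⟩
    rw [hflip, hflip] at hne
    rcases lt_trichotomy j v with h | h | h
    · rw [if_pos (by omega), if_pos (by omega)] at hne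
      simpa using hne
    · subst h
      simp [htop, hlead]
    · rwa [if_neg (by omega), if_neg (by omega)] at hne

lemma map_range_palindrome_iff (g : ℕ → ℕ) (L : ℕ) :
    ((List.range L).map g).Palindrome ↔ ∀ t < L, g t = g (L - 1 - t) := by
  rw [List.Palindrome.iff_reverse_eq, List.ext_getElem_iff]
  simp only [List.length_reverse, List.length_map, List.length_range, List.getElem_reverse,
    List.getElem_map, List.getElem_range, true_and]
  exact ⟨fun h t ht => (h t ht ht).symm, fun h t ht _ => (h t ht).symm⟩

lemma val_lt_val_add {a : ℕ} (ha : 0 < a) :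
    padicValNat 2 a < padicValNat 2 (a + 2 ^ padicValNat 2 a) := by
  obtain ⟨q, hq⟩ := pow_padicValNat_dvd (p := 2) (n := a)
  have hnd := pow_succ_padicValNat_not_dvd (p := 2) ha.ne'
  set v := padicValNat 2 a
  have hodd : ¬ 2 ∣ q := by
    rintro ⟨c, rfl⟩
    exact hnd ⟨c, by rw [hq]; ring⟩
  have : 2 ^ (v + 1) ∣ a + 2 ^ v := by
    refine ⟨(q + 1) / 2, ?_⟩
    have h2 : q + 1 = 2 * ((q + 1) / 2) := by omega
    calc a + 2 ^ v = 2 ^ v * (q + 1) := by rw [hq]; ring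
      _ = 2 ^ v * (2 * ((q + 1) / 2)) := by rw [← h2]
      _ = _ := by ring
  exact (padicValNat_dvd_iff_le (by positivity)).1 this

/-- A palindromic factor on positions `i + 1, …, n` forces `i` and `n` to agree above some
bit `v` and to have complementary bits up to `v`; the proof takes for `v` the largest letter of the
factor. -/
lemma exists_low_block_of_palindrome {i n : ℕ} (hin : i < n)
    (hpal : ∀ a, i < a → a ≤ n → padicValNat 2 a = padicValNat 2 (i + n + 1 - a)) :
    ∃ v s x, x < 2 ^ (v + 1) ∧ n = 2 ^ (v + 1) * s + x ∧
      i = 2 ^ (v + 1) * s + (2 ^ (v + 1) - (x + 1)) := by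
  obtain ⟨a, ha, hmax⟩ := Finset.exists_max_image (Finset.Ioc i n) (padicValNat 2)
    ⟨n, by simp [hin]⟩
  rw [Finset.mem_Ioc] at ha
  have hmax' : ∀ b, i < b → b ≤ n → padicValNat 2 b ≤ padicValNat 2 a :=
    fun b h1 h2 => hmax b (by simp [h1, h2])
  set v := padicValNat 2 a with hv
  -- Maximality leaves no room for a step of `2 ^ v` from a position of valuation `v`.
  have hstep : ∀ b, i < b → padicValNat 2 b = v → n < b + 2 ^ v := by
    intro b h1 h2
    by_contra hcon
    have h3 := val_lt_val_add (show 0 < b by omega)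
    rw [h2] at h3
    have := hmax' (b + 2 ^ v) (Nat.lt_add_right _ h1) (by omega)
    omega
  have hnolt : ∀ b c, i < b → b < c → c ≤ n → padicValNat 2 b = v →
      padicValNat 2 c = v → False := by
    intro b c h1 h2 h3 hb hc
    have d1 : 2 ^ v ∣ b := hb ▸ pow_padicValNat_dvd
    have d2 : 2 ^ v ∣ c := hc ▸ pow_padicValNat_dvd
    have := Nat.le_of_dvd (by omega) (Nat.dvd_sub d2 d1)
    have := hstep b h1 hb
    omega
  have hmid : i + n + 1 - a = a := by
    have hval := hpal a ha.1 ha.2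
    rcases lt_trichotomy (i + n + 1 - a) a with h | h | h
    · exact (hnolt _ _ (by omega) h ha.2 hval.symm rfl).elim
    · exact h
    · exact (hnolt _ _ ha.1 h (by omega) rfl hval.symm).elim
  have hr := hstep a ha.1 rfl
  obtain ⟨q, hq⟩ := pow_padicValNat_dvd (p := 2) (n := a)
  have hnd := pow_succ_padicValNat_not_dvd (p := 2) (show a ≠ 0 by omega)
  rw [← hv] at hq hnd
  have hodd : ¬ 2 ∣ q := by
    rintro ⟨c, rfl⟩
    exact hnd ⟨c, by rw [hq]; ring⟩
  obtain ⟨s, rfl⟩ : ∃ s, q = 2 * s + 1 := ⟨q / 2, by omega⟩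
  have hp : 2 ^ (v + 1) = 2 * 2 ^ v := by ring
  have hq' : a = 2 ^ (v + 1) * s + 2 ^ v := by rw [hq]; ring
  refine ⟨v, s, 2 ^ v + (n - a), ?_, ?_, ?_⟩ <;> omega

lemma val_two_pow_sub {k a : ℕ} (h0 : 0 < a) (h1 : a < 2 ^ k) :
    padicValNat 2 a = padicValNat 2 (2 ^ k - a) := by
  have key : ∀ b, 0 < b → b < 2 ^ k → padicValNat 2 b ≤ padicValNat 2 (2 ^ k - b) := by
    intro b hb0 hb1
    have hd : 2 ^ padicValNat 2 b ∣ b := pow_padicValNat_dvd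
    have hle : padicValNat 2 b ≤ k :=
      ((Nat.pow_lt_pow_iff_right (by norm_num)).1
        ((Nat.le_of_dvd hb0 hd).trans_lt hb1)).le
    exact (padicValNat_dvd_iff_le (by omega)).1 (Nat.dvd_sub (pow_dvd_pow 2 hle) hd)
  apply le_antisymm (key a h0 h1)
  have := key (2 ^ k - a) (by omega) (by omega)
  rwa [show 2 ^ k - (2 ^ k - a) = a by omega] at this

lemma ruler_prefix_add (i L : ℕ) :
    ((List.range (i + L)).map fun t => padicValNat 2 (t + 1)) =
      ((List.range i).map fun t => padicValNat 2 (t + 1)) ++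
        (List.range L).map fun t => padicValNat 2 (i + t + 1) := by
  rw [List.range_add, List.map_append, List.map_map]
  rfl

/-- Lower bound: each palindrome of a factorization adds at most one run. -/
lemma runs_le_length (l : List (List ℕ)) : ∀ n : ℕ,
    (∀ p ∈ l, p ≠ [] ∧ p.Palindrome) →
    l.flatten = ((List.range n).map fun t => padicValNat 2 (t + 1)) → runs n ≤ l.length := by
  induction l using List.reverseRecOn with
  | nil =>
    intro n _ h
    have : 0 = n := by simpa using congrArg List.length h
    subst this
    simp [runs]
  | append_singleton l p ih =>
    intro n hl h
    obtain ⟨hne, hp⟩ := hl p (by simp)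
    have hlen : l.flatten.length + p.length = n := by
      simpa [-List.length_flatten] using congrArg List.length h
    set i := l.flatten.length with hi
    have hpos : 0 < p.length := List.length_pos_iff.2 hne
    rw [← hlen, ruler_prefix_add, List.flatten_append] at h
    obtain ⟨e1, e2⟩ := List.append_inj h (by rw [← hi]; simp)
    have hIH := ih i (fun q hq => hl q (by simp [hq])) e1
    have e3 : p = (List.range p.length).map fun t => padicValNat 2 (i + t + 1) := by
      simpa using e2
    rw [e3, map_range_palindrome_iff] at hp
    obtain ⟨v, s, x, hx, hn, his⟩ := exists_low_block_of_palindrome (show i < n by omega) <| by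
      intro a h1 h2
      have := hp (a - i - 1) (by omega)
      rwa [show i + (a - i - 1) + 1 = a by omega,
        show i + (p.length - 1 - (a - i - 1)) + 1 = i + n + 1 - a by omega] at this
    have := runs_le_runs_add_one (s := s) hx
    rw [← hn, ← his] at this
    rw [List.length_append, List.length_singleton]
    omega

/-- Upper bound: the last palindrome starts after the digitwise complement of `n`. -/
lemma exists_factorization (n : ℕ) : ∃ l : List (List ℕ), l.length = runs n ∧
    (∀ p ∈ l, p ≠ [] ∧ p.Palindrome) ∧
      l.flatten = ((List.range n).map fun t => padicValNat 2 (t + 1)) := by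
  induction n using Nat.strong_induction_on with
  | _ n ih =>
    rcases Nat.eq_zero_or_pos n with rfl | hn
    · exact ⟨[], by simp [runs]⟩
    have h1 : 2 ^ Nat.log 2 n ≤ n := Nat.pow_log_le_self 2 hn.ne'
    have h2 : n < 2 ^ (Nat.log 2 n + 1) := Nat.lt_pow_succ_log_self (by norm_num) n
    have hruns := runs_complement h1 h2
    have hp : 2 ^ (Nat.log 2 n + 1) = 2 * 2 ^ Nat.log 2 n := by ring
    set k := Nat.log 2 n + 1
    obtain ⟨i, hi⟩ : ∃ i, i = 2 ^ k - (n + 1) := ⟨_, rfl⟩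
    rw [← hi] at hruns
    obtain ⟨l, hl1, hl2, hl3⟩ := ih i (by omega)
    refine ⟨l ++ [(List.range (n - i)).map fun t => padicValNat 2 (i + t + 1)], ?_, ?_, ?_⟩
    · simp [hl1, hruns]
    · intro p hmem
      rw [List.mem_append, List.mem_singleton] at hmem
      rcases hmem with hmem | rfl
      · exact hl2 p hmem
      refine ⟨?_, (map_range_palindrome_iff _ _).2 fun t ht => ?_⟩
      · rw [← List.length_pos_iff]
        simp only [List.length_map, List.length_range]
        omega
      · rw [val_two_pow_sub (k := k) (by omega) (by omega)]
        congr 1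
        omega
    · have := ruler_prefix_add i (n - i)
      rw [show i + (n - i) = n by omega] at this
      simp [this, hl3]

/-- The paper's Theorem 1 (with Proposition 1): for `n ≥ 1`, the palindromic length of the
prefix `(ν₂(1), ν₂(2), …, ν₂(n))` of the ruler sequence equals the number of runs in the
binary expansion of `n`. -/
theorem ruler_palLen_eq_runs (n : ℕ) (hn : 0 < n) :
    palLen ((List.range n).map fun t => padicValNat 2 (t + 1)) = runs n := by
  obtain ⟨l, hl⟩ := exists_factorization n
  apply le_antisymm
  · exact Nat.sInf_le ⟨l, hl⟩
  · refine le_csInf ⟨_, l, hl⟩ ?_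
    rintro k ⟨l', rfl, h1, h2⟩
    exact runs_le_length l' n h1 h2
end

section
/- For every positive integer n, the palindromic length of the finite word (ν₂(1), ν₂(2), …, ν₂(n)) equals the least natural number m such that n can be written as the XOR (bitwise exclusive-or fold) of a list of m natural numbers, each of the form 2^v − 1 with v ≥ 1. (This is the paper's Theorem 1 in the form: the palindromic length of the prefix of the ruler sequence of length n is the minimal number of masque operations of type A needed to change the binary expansion of n into the all-zero word.) -/
/-- The word `ν₂(i + 1), …, ν₂(i + d)`. -/
def rulerSeg (i d : ℕ) : List ℕ := (List.range d).map fun t => padicValNat 2 (i + t + 1)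

/-- The prefix of length `n` of the ruler sequence is a product of `k` nonempty palindromes. -/
def HasPalFactorization (k n : ℕ) : Prop :=
  ∃ l : List (List ℕ), l.length = k ∧ (∀ p ∈ l, p ≠ [] ∧ p.Palindrome) ∧ l.flatten = rulerSeg 0 n

/-- The factor at positions `i + 1, …, j` is a palindrome: positions that are mirror images of each
other are divisible by the same powers of `2`. -/
def PalSeg (i j : ℕ) : Prop :=
  ∀ x y : ℕ, x + y = i + j + 1 → i < x → i < y → ∀ e : ℕ, 2 ^ e ∣ x ↔ 2 ^ e ∣ y

/-- The XOR of the numbers `2 ^ v - 1` for `v ∈ S`. -/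
def xorMasques (S : Finset ℕ) : ℕ := S.fold (· ^^^ ·) 0 fun v => 2 ^ v - 1

lemma rulerSeg_add (i d : ℕ) : rulerSeg 0 (i + d) = rulerSeg 0 i ++ rulerSeg i d := by
  simp [rulerSeg, List.range_add, Function.comp_def]

lemma length_rulerSeg (i d : ℕ) : (rulerSeg i d).length = d := by simp [rulerSeg]

lemma padicValNat_two_eq_iff {x y : ℕ} (hx : 0 < x) (hy : 0 < y) :
    padicValNat 2 x = padicValNat 2 y ↔ ∀ e : ℕ, 2 ^ e ∣ x ↔ 2 ^ e ∣ y := by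
  constructor
  · intro h e
    rw [padicValNat_dvd_iff_le hx.ne', padicValNat_dvd_iff_le hy.ne', h]
  · intro h
    apply le_antisymm
    · rw [← padicValNat_dvd_iff_le hy.ne', ← h]
      exact pow_padicValNat_dvd
    · rw [← padicValNat_dvd_iff_le hx.ne', h]
      exact pow_padicValNat_dvd

lemma rulerSeg_palindrome_iff (i d : ℕ) : (rulerSeg i d).Palindrome ↔ PalSeg i (i + d) := by
  rw [List.Palindrome.iff_reverse_eq]
  constructor
  · intro h x y hxy hx hy
    rw [← padicValNat_two_eq_iff (by omega) (by omega)]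
    have h1 : (rulerSeg i d).reverse[y - i - 1]'(by simp [length_rulerSeg]; omega) =
        (rulerSeg i d)[y - i - 1]'(by simp [length_rulerSeg]; omega) := by simp only [h]
    simp only [rulerSeg, List.getElem_reverse, List.getElem_map, List.getElem_range,
      List.length_map, List.length_range] at h1
    convert h1 using 2 <;> omega
  · intro h
    apply List.ext_getElem
    · simp
    · intro t h1 h2
      rw [length_rulerSeg] at h2
      simp only [rulerSeg, List.getElem_reverse, List.getElem_map, List.getElem_range,
        List.length_map, List.length_range]
      rw [padicValNat_two_eq_iff (by omega) (by omega)]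
      exact h _ _ (by omega) (by omega) (by omega)

/-- Two numbers in the same block of length `2 ^ k` that are mirror images in it differ exactly in
their last `k` binary digits. -/
lemma xor_mirror (k q r s : ℕ) (h : r + s + 1 = 2 ^ k) :
    (2 ^ k * q + r) ^^^ (2 ^ k * q + s) = 2 ^ k - 1 := by
  obtain rfl : s = 2 ^ k - (r + 1) := by omega
  apply Nat.eq_of_testBit_eq
  intro b
  rw [Nat.testBit_xor, Nat.testBit_two_pow_mul_add _ (by omega),
    Nat.testBit_two_pow_mul_add _ (by omega), Nat.testBit_two_pow_sub_one,
    Nat.testBit_two_pow_sub_succ (by omega)]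
  by_cases hb : b < k <;> simp [hb]

lemma exists_mirror_of_xor (k i j : ℕ) (h : i ^^^ j = 2 ^ k - 1) :
    ∃ q r s, r + s + 1 = 2 ^ k ∧ i = 2 ^ k * q + r ∧ j = 2 ^ k * q + s := by
  have hr : i % 2 ^ k < 2 ^ k := Nat.mod_lt _ (by positivity)
  refine ⟨i / 2 ^ k, i % 2 ^ k, 2 ^ k - 1 - i % 2 ^ k, by omega, (Nat.div_add_mod _ _).symm, ?_⟩
  have h2 := xor_mirror k (i / 2 ^ k) (i % 2 ^ k) (2 ^ k - 1 - i % 2 ^ k) (by omega)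
  rw [Nat.div_add_mod] at h2
  exact Nat.xor_right_injective (h.trans h2.symm)

lemma palSeg_of_xor {i j k : ℕ} (h : i ^^^ j = 2 ^ k - 1) : PalSeg i j := by
  obtain ⟨q, r, s, hrs, rfl, rfl⟩ := exists_mirror_of_xor k i j h
  intro x y hxy hx hy e
  have hsum : x + y = 2 ^ k * (2 * q + 1) := by linarith
  rcases le_or_gt e k with he | he
  · have hd : 2 ^ e ∣ x + y := hsum ▸ (pow_dvd_pow 2 he).mul_right _
    exact ⟨fun H => (Nat.dvd_add_right H).1 hd, fun H => (Nat.dvd_add_left H).1 hd⟩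
  · -- Neither number is divisible by `2 ^ k`: both lie strictly inside the block.
    have key : ∀ z, 2 ^ k * q < z → z < 2 ^ k * (q + 1) → ¬ 2 ^ e ∣ z := by
      rintro z h1 h2 hz
      obtain ⟨w, rfl⟩ := (pow_dvd_pow 2 he.le).trans hz
      have h3 := lt_of_mul_lt_mul_left h1 (Nat.zero_le _)
      have h4 := lt_of_mul_lt_mul_left h2 (Nat.zero_le _)
      omega
    have hx' := key x (by omega) (by linarith)
    have hy' := key y (by omega) (by linarith)
    tauto

lemma xor_of_palSeg {i j : ℕ} (hij : i < j) (h : PalSeg i j) :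
    ∃ k, 1 ≤ k ∧ i ^^^ j = 2 ^ k - 1 := by
  -- In even length the two middle positions would have opposite parities.
  have hodd : (i + j) % 2 = 1 := by
    by_contra hc
    have := h ((i + j) / 2) ((i + j) / 2 + 1) (by omega) (by omega) (by omega) 1
    omega
  obtain ⟨c, hc⟩ : ∃ c, i + j + 1 = 2 * c := ⟨(i + j + 1) / 2, by omega⟩
  obtain ⟨u, m, hm, hcm⟩ := Nat.exists_eq_two_pow_mul_odd (n := c) (by omega)
  obtain ⟨q, rfl⟩ := hm
  have hpow : 2 ^ (u + 1) = 2 * 2 ^ u := by ring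
  have hcq : c = 2 ^ (u + 1) * q + 2 ^ u := by rw [hcm]; ring
  -- The half-length is less than `2 ^ u`: otherwise compare the positions `c ± 2 ^ u`.
  have hlt : j < c + 2 ^ u := by
    by_contra hge
    have h1 := h (2 ^ (u + 1) * (q + 1)) (2 ^ (u + 1) * q) (by rw [hc, hcq, hpow]; ring)
      (by rw [mul_add]; omega) (by omega) (u + 2)
    have hp : 0 < 2 ^ (u + 1) := by positivity
    rw [pow_succ 2 (u + 1), Nat.mul_dvd_mul_iff_left hp, Nat.mul_dvd_mul_iff_left hp] at h1
    omega
  refine ⟨u + 1, by omega, ?_⟩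
  have := xor_mirror (u + 1) q (i - 2 ^ (u + 1) * q) (j - 2 ^ (u + 1) * q) (by omega)
  rwa [Nat.add_sub_cancel' (by omega), Nat.add_sub_cancel' (by omega)] at this

lemma HasPalFactorization.step {k i j v : ℕ} (h : HasPalFactorization k i) (hij : i < j)
    (hx : i ^^^ j = 2 ^ v - 1) : HasPalFactorization (k + 1) j := by
  obtain ⟨d, rfl⟩ := Nat.exists_eq_add_of_lt hij
  obtain ⟨l, hl, hp, hf⟩ := h
  refine ⟨l ++ [rulerSeg i (d + 1)], by simp [hl], ?_, ?_⟩
  · intro p hpm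
    rcases List.mem_append.1 hpm with hpm | hpm
    · exact hp p hpm
    · rw [List.mem_singleton.1 hpm]
      refine ⟨?_, (rulerSeg_palindrome_iff _ _).2 (palSeg_of_xor hx)⟩
      rw [← List.length_pos_iff, length_rulerSeg]
      omega
  · rw [List.flatten_append, hf, add_assoc, rulerSeg_add]
    simp

lemma exists_masques_of_factorization (l : List (List ℕ)) :
    ∀ n, (∀ p ∈ l, p ≠ [] ∧ p.Palindrome) → l.flatten = rulerSeg 0 n →
      ∃ l' : List ℕ, l'.length = l.length ∧ (∀ x ∈ l', ∃ v : ℕ, 1 ≤ v ∧ x = 2 ^ v - 1) ∧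
        l'.foldr (· ^^^ ·) 0 = n := by
  induction l using List.reverseRecOn with
  | nil =>
    intro n _ h
    have := congrArg List.length h
    rw [length_rulerSeg] at this
    exact ⟨[], rfl, by simp, by simpa using this⟩
  | append_singleton l p ih =>
    intro n hp h
    rw [List.flatten_append] at h
    simp only [List.flatten_cons, List.flatten_nil, List.append_nil] at h
    have hn : l.flatten.length + p.length = n := by
      rw [← List.length_append, h, length_rulerSeg]
    obtain ⟨hne, hpal⟩ := hp p (by simp)
    rw [← hn, rulerSeg_add] at h
    obtain ⟨h1, h2⟩ := List.append_inj h (length_rulerSeg _ _).symm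
    obtain ⟨l', hl', hm, hx⟩ := ih _ (fun r hr => hp r (by simp [hr])) h1
    rw [h2, rulerSeg_palindrome_iff, hn] at hpal
    have hpos := List.length_pos_iff.2 hne
    obtain ⟨v, hv, hxv⟩ := xor_of_palSeg (by omega) hpal
    refine ⟨(2 ^ v - 1) :: l', by simp [hl'], ?_, ?_⟩
    · intro x hxm
      rcases List.mem_cons.1 hxm with rfl | hxm
      · exact ⟨v, hv, rfl⟩
      · exact hm x hxm
    · rw [List.foldr_cons, hx, ← hxv, Nat.xor_comm, ← Nat.xor_assoc, Nat.xor_self, Nat.zero_xor]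

lemma xorMasques_insert {S : Finset ℕ} {v : ℕ} (h : v ∉ S) :
    xorMasques (insert v S) = (2 ^ v - 1) ^^^ xorMasques S := Finset.fold_insert h

/-- Cancelling equal terms in pairs turns a list of masques into a set, without increasing the
number of terms. -/
lemma exists_finset_of_masques (l : List ℕ) (hl : ∀ x ∈ l, ∃ v : ℕ, 1 ≤ v ∧ x = 2 ^ v - 1) :
    ∃ S : Finset ℕ, S.card ≤ l.length ∧ (∀ v ∈ S, 1 ≤ v) ∧
      xorMasques S = l.foldr (· ^^^ ·) 0 := by
  induction l with
  | nil => exact ⟨∅, by simp, by simp, by simp [xorMasques]⟩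
  | cons x l ih =>
    obtain ⟨S, hc, hS, hx⟩ := ih fun y hy => hl y (by simp [hy])
    obtain ⟨v, hv, rfl⟩ := hl x (by simp)
    by_cases hvS : v ∈ S
    · refine ⟨S.erase v, ?_, fun w hw => hS w (Finset.mem_of_mem_erase hw), ?_⟩
      · have := Finset.card_erase_le (s := S) (a := v)
        simp only [List.length_cons]
        omega
      · have := xorMasques_insert (Finset.notMem_erase v S)
        rw [Finset.insert_erase hvS] at this
        rw [List.foldr_cons, ← hx, this, ← Nat.xor_assoc, Nat.xor_self, Nat.zero_xor]
    · refine ⟨insert v S, ?_, ?_, ?_⟩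
      · rw [Finset.card_insert_of_notMem hvS]
        simpa using hc
      · intro w hw
        rcases Finset.mem_insert.1 hw with rfl | hw
        · exact hv
        · exact hS w hw
      · rw [xorMasques_insert hvS, hx, List.foldr_cons]

lemma xorMasques_lt (S : Finset ℕ) (a : ℕ) (h : ∀ v ∈ S, v ≤ a) : xorMasques S < 2 ^ a := by
  induction S using Finset.induction_on with
  | empty => simp [xorMasques]
  | insert v S hv ih =>
    rw [xorMasques_insert hv]
    refine Nat.xor_lt_two_pow ?_ (ih fun w hw => h w (by simp [hw]))
    have := Nat.pow_le_pow_right (n := 2) (by norm_num) (h v (by simp))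
    have : 0 < 2 ^ v := by positivity
    omega

/-- Applying distinct masques in increasing order yields an increasing path from `0`. -/
lemma hasPalFactorization_xorMasques (S : Finset ℕ) (hS : ∀ v ∈ S, 1 ≤ v) :
    HasPalFactorization S.card (xorMasques S) := by
  induction S using Finset.induction_on_max with
  | empty => exact ⟨[], rfl, by simp, by simp [xorMasques, rulerSeg]⟩
  | insert a S hlt ih =>
    have ha : a ∉ S := fun h => (hlt a h).false
    rw [Finset.card_insert_of_notMem ha, xorMasques_insert ha]
    obtain ⟨b, rfl⟩ : ∃ b, a = b + 1 := ⟨a - 1, by have := hS a (by simp); omega⟩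
    have hsm : xorMasques S < 2 ^ b := xorMasques_lt S b fun v hv => by have := hlt v hv; omega
    have hx : xorMasques S ^^^ ((2 ^ (b + 1) - 1) ^^^ xorMasques S) = 2 ^ (b + 1) - 1 := by
      rw [Nat.xor_comm, Nat.xor_assoc, Nat.xor_self, Nat.xor_zero]
    refine (ih fun v hv => hS v (by simp [hv])).step ?_ hx
    have hpow : 2 ^ (b + 1) = 2 * 2 ^ b := by ring
    -- The new value is `2 ^ (b + 1) - 1 - i`, where `i < 2 ^ b` is the current one.
    have h0 := xor_mirror (b + 1) 0 (xorMasques S) (2 ^ (b + 1) - 1 - xorMasques S) (by omega)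
    simp only [Nat.mul_zero, Nat.zero_add] at h0
    rw [← Nat.xor_right_injective (h0.trans hx.symm)]
    omega

/-- The paper's Theorem 1: for `n ≥ 1`, the palindromic length of the prefix
`(ν₂(1), ν₂(2), …, ν₂(n))` of the ruler sequence equals the minimal number of type-A masque
operations needed to change the binary expansion of `n` into the all-zero word, i.e. the
least `m` such that `n` is the XOR of `m` numbers of the form `2 ^ v - 1` with `v ≥ 1`. -/
theorem ruler_palLen_eq_min_typeA_masques (n : ℕ) (hn : 0 < n) :
    palLen ((List.range n).map fun t => padicValNat 2 (t + 1)) =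
      sInf {m : ℕ | ∃ l : List ℕ, l.length = m ∧
        (∀ x ∈ l, ∃ v : ℕ, 1 ≤ v ∧ x = 2 ^ v - 1) ∧
        l.foldr (· ^^^ ·) 0 = n} := by
  have hw : ((List.range n).map fun t => padicValNat 2 (t + 1)) = rulerSeg 0 n := by
    simp [rulerSeg]
  rw [hw]
  have hmasq : ∀ k, HasPalFactorization k n → ∃ l : List ℕ, l.length = k ∧
      (∀ x ∈ l, ∃ v : ℕ, 1 ≤ v ∧ x = 2 ^ v - 1) ∧ l.foldr (· ^^^ ·) 0 = n := by
    rintro k ⟨l, rfl, hp, hf⟩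
    exact exists_masques_of_factorization l n hp hf
  -- Singletons factor the word, so neither infimum is over the empty set.
  have hne : HasPalFactorization n n := by
    refine ⟨(rulerSeg 0 n).map fun a => [a], by simp [length_rulerSeg], ?_, ?_⟩
    · intro p hp
      obtain ⟨a, -, rfl⟩ := List.mem_map.1 hp
      exact ⟨by simp, List.Palindrome.singleton a⟩
    · simp [← List.flatMap_def]
  apply le_antisymm
  · refine le_csInf ⟨n, hmasq n hne⟩ ?_
    rintro m ⟨l, rfl, hm, hx⟩
    obtain ⟨S, hc, hS, hxS⟩ := exists_finset_of_masques l hm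
    have hfac := hasPalFactorization_xorMasques S hS
    rw [hxS, hx] at hfac
    exact (Nat.sInf_le hfac).trans hc
  · exact le_csInf ⟨n, hne⟩ fun k hk => Nat.sInf_le (hmasq k hk)
end

section
/- Let i and j be positive integers with i < j, and let b(n) = ν₂(n) mod 2 denote the period-doubling sequence. If the finite word (b(i), b(i+1), …, b(j)) is a palindrome, then one of the following holds: (1) there exist an odd positive integer o, an integer v ≥ 1, and an integer x with 1 ≤ x < 2^v, such that i = o·2^v − x and j = o·2^v + x; (2) there exist an odd positive integer o, integers v1 > v2 ≥ 0 with v1 ≡ v2 (mod 2), and an integer x with 0 ≤ x < 2^(v2), such that i = o·2^(v1) − x and j = o·2^(v1) + 2^(v2) + x; (3) there exist an odd positive integer o, integers v1 > v2 ≥ 0 with v1 ≡ v2 (mod 2), and an integer x with 0 ≤ x < 2^(v2), such that i = o·2^(v1) − 2^(v2) − x and j = o·2^(v1) + x. -/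
/-!
The word `b(i) … b(j)` is a palindrome exactly when `b m = b (i + j - m)` for all `m ∈ [i, j]`.
The proof is a strong induction on `j`, using `b (2n) = 1 - b n` and `b (odd) = 0`.

If `i + j` is even, the reflection `m ↦ i + j - m` preserves parity, so the even elements of
`[i, j]`, after halving, again index a palindrome, on `[⌈i/2⌉, ⌊j/2⌋]`. If that interval is a single
point then `i = 2c - 1`, `j = 2c + 1`, which is the first form; otherwise each of the three forms
for it yields the same form for `[i, j]`, with all exponents raised by one and `x` replaced by `2x`
or `2x + 1` (`PDForm.double`).

If `i + j` is odd, the reflection exchanges even and odd numbers, so `b` vanishes on every even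
element of `[i, j]`. Since `b (4k + 2) = 1`, the interval avoids the class `2 mod 4`; having even
length, it consists of two elements, one of which is a positive multiple of `4` with `b = 0`. This is
the second or third form with `v2 = 0` and `x = 0`.
-/

/-- The interval `[i, j]` has one of the three forms of the classification. -/
def PDForm (i j : ℕ) : Prop :=
    (∃ o v x : ℕ, Odd o ∧ 0 < o ∧ 1 ≤ v ∧ 1 ≤ x ∧ x < 2 ^ v ∧
      i + x = o * 2 ^ v ∧ j = o * 2 ^ v + x) ∨
    (∃ o v1 v2 x : ℕ, Odd o ∧ 0 < o ∧ v2 < v1 ∧ v1 % 2 = v2 % 2 ∧ x < 2 ^ v2 ∧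
      i + x = o * 2 ^ v1 ∧ j = o * 2 ^ v1 + 2 ^ v2 + x) ∨
    (∃ o v1 v2 x : ℕ, Odd o ∧ 0 < o ∧ v2 < v1 ∧ v1 % 2 = v2 % 2 ∧ x < 2 ^ v2 ∧
      i + 2 ^ v2 + x = o * 2 ^ v1 ∧ j = o * 2 ^ v1 + x)

/-- Each form is stable under doubling the interval, both for the doubled endpoints themselves and
for the interval enlarged by one on each side. -/
theorem PDForm.double {a c e i j : ℕ} (h : PDForm a c) (he : e ≤ 1) (hi : i + e = 2 * a)
    (hj : j = 2 * c + e) : PDForm i j := by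
  rcases h with ⟨o, v, x, ho, hp, hv, hx, hxv, h1, h2⟩ | ⟨o, v1, v2, x, ho, hp, hv, hm, hxv, h1, h2⟩ |
    ⟨o, v1, v2, x, ho, hp, hv, hm, hxv, h1, h2⟩
  · have h3 : o * 2 ^ (v + 1) = 2 * (o * 2 ^ v) := by ring
    have h4 : 2 ^ (v + 1) = 2 * 2 ^ v := by ring
    exact Or.inl ⟨o, v + 1, 2 * x + e, ho, hp, by omega, by omega, by omega, by omega, by omega⟩
  · have h3 : o * 2 ^ (v1 + 1) = 2 * (o * 2 ^ v1) := by ring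
    have h4 : 2 ^ (v2 + 1) = 2 * 2 ^ v2 := by ring
    exact Or.inr (Or.inl ⟨o, v1 + 1, v2 + 1, 2 * x + e, ho, hp, by omega, by omega, by omega,
      by omega, by omega⟩)
  · have h3 : o * 2 ^ (v1 + 1) = 2 * (o * 2 ^ v1) := by ring
    have h4 : 2 ^ (v2 + 1) = 2 * 2 ^ v2 := by ring
    exact Or.inr (Or.inr ⟨o, v1 + 1, v2 + 1, 2 * x + e, ho, hp, by omega, by omega, by omega,
      by omega, by omega⟩)

theorem padicValNat_two_mul {n : ℕ} (hn : 0 < n) :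
    padicValNat 2 (2 * n) = padicValNat 2 n + 1 := by
  rw [padicValNat.mul (by norm_num) hn.ne', padicValNat_self, add_comm]

theorem padicValNat_two_odd {n : ℕ} (hn : n % 2 = 1) : padicValNat 2 n = 0 :=
  padicValNat.eq_zero_of_not_dvd (by omega)

theorem exists_odd_mul_two_pow {n : ℕ} (hn : 0 < n) :
    ∃ o, Odd o ∧ 0 < o ∧ n = o * 2 ^ padicValNat 2 n := by
  obtain ⟨o, ho⟩ := pow_padicValNat_dvd (p := 2) (n := n)
  have hodd : Odd o := by
    rw [← Nat.not_even_iff_odd]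
    rintro ⟨r, rfl⟩
    apply pow_succ_padicValNat_not_dvd (p := 2) hn.ne'
    refine ⟨r, ?_⟩
    rw [pow_succ]
    nth_rewrite 1 [ho]
    ring
  exact ⟨o, hodd, hodd.pos, by rw [mul_comm]; exact ho⟩

/-- The classification, with the palindrome property expressed as invariance under the reflection
`m ↦ i + j - m`. -/
theorem pdForm_of_reflect (j : ℕ) : ∀ i, 0 < i → i < j →
    (∀ m, i ≤ m → m ≤ j → padicValNat 2 m % 2 = padicValNat 2 (i + j - m) % 2) →
    PDForm i j := by
  induction j using Nat.strong_induction_on with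
  | _ j ih =>
  intro i hi hij hp
  rcases Nat.mod_two_eq_zero_or_one (i + j) with hs | hs
  · obtain ⟨a, c, e, he, hia, hjc⟩ : ∃ a c e, e ≤ 1 ∧ i + e = 2 * a ∧ j = 2 * c + e :=
      ⟨(i + 1) / 2, j / 2, i % 2, by omega, by omega, by omega⟩
    rcases Nat.lt_or_ge a c with hac | hac
    · refine (ih c (by omega) a (by omega) hac ?_).double he hia hjc
      intro m hm1 hm2
      have h := hp (2 * m) (by omega) (by omega)
      rw [show i + j - 2 * m = 2 * (a + c - m) by omega, padicValNat_two_mul (by omega),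
        padicValNat_two_mul (by omega)] at h
      omega
    -- If `a = c`, then `e = 1` and the interval is `[2c - 1, 2c + 1]`.
    · obtain ⟨o, ho, hop, hn⟩ := exists_odd_mul_two_pow (n := 2 * c) (by omega)
      have hv := padicValNat_two_mul (n := c) (by omega)
      refine Or.inl ⟨o, padicValNat 2 (2 * c), 1, ho, hop, by omega, le_rfl, ?_, by omega, by omega⟩
      exact Nat.one_lt_two_pow (by omega)
  · have key : ∀ m, i ≤ m → m ≤ j → m % 2 = 0 → padicValNat 2 m % 2 = 0 := by
      intro m h1 h2 h3
      rw [hp m h1 h2, padicValNat_two_odd (by omega)]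
    have four : ∀ m, i ≤ m → m ≤ j → m % 4 ≠ 2 := by
      intro m h1 h2 h3
      have h := key m h1 h2 (by omega)
      rw [show m = 2 * (m / 2) by omega, padicValNat_two_mul (by omega),
        padicValNat_two_odd (by omega)] at h
      omega
    -- Four consecutive integers would contain one congruent to `2` modulo `4`.
    have hlen : j = i + 1 := by
      by_contra hne
      have h0 := four i (by omega) (by omega)
      have h1 := four (i + 1) (by omega) (by omega)
      have h2 := four (i + 2) (by omega) (by omega)
      have h3 := four (i + 3) (by omega) (by omega)
      omega
    have ev : ∀ m, i ≤ m → m ≤ j → m % 2 = 0 → ∃ o v1, Odd o ∧ 0 < o ∧ 0 < v1 ∧ v1 % 2 = 0 ∧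
        m = o * 2 ^ v1 := by
      intro m h1 h2 h3
      obtain ⟨o, ho, hop, hn⟩ := exists_odd_mul_two_pow (n := m) (by omega)
      refine ⟨o, _, ho, hop, ?_, key m h1 h2 h3, hn⟩
      rw [show m = 2 * (m / 2) by omega, padicValNat_two_mul (by omega)]
      omega
    rcases Nat.mod_two_eq_zero_or_one i with hpar | hpar
    · obtain ⟨o, v1, ho, hop, hv, hve, hn⟩ := ev i le_rfl hij.le hpar
      exact Or.inr (Or.inl ⟨o, v1, 0, 0, ho, hop, hv, hve, by norm_num, by omega,
        by rw [pow_zero]; omega⟩)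
    · obtain ⟨o, v1, ho, hop, hv, hve, hn⟩ := ev j hij.le le_rfl (by omega)
      exact Or.inr (Or.inr ⟨o, v1, 0, 0, ho, hop, hv, hve, by norm_num, by rw [pow_zero]; omega,
        by omega⟩)


/-- The paper's Lemma 3 (one direction): if `0 < i < j` and the factor
`(b(i), b(i+1), …, b(j))` of the period-doubling sequence `b(n) = ν₂(n) mod 2` is a
palindrome, then the interval `[i, j]` is of one of the three described forms. -/
theorem pd_palindrome_cases (i j : ℕ) (hi : 0 < i) (hij : i < j)
    (hpal : ((List.range (j - i + 1)).map fun t => padicValNat 2 (i + t) % 2).Palindrome) :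
    (∃ o v x : ℕ, Odd o ∧ 0 < o ∧ 1 ≤ v ∧ 1 ≤ x ∧ x < 2 ^ v ∧
      i + x = o * 2 ^ v ∧ j = o * 2 ^ v + x) ∨
    (∃ o v1 v2 x : ℕ, Odd o ∧ 0 < o ∧ v2 < v1 ∧ v1 % 2 = v2 % 2 ∧ x < 2 ^ v2 ∧
      i + x = o * 2 ^ v1 ∧ j = o * 2 ^ v1 + 2 ^ v2 + x) ∨
    (∃ o v1 v2 x : ℕ, Odd o ∧ 0 < o ∧ v2 < v1 ∧ v1 % 2 = v2 % 2 ∧ x < 2 ^ v2 ∧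
      i + 2 ^ v2 + x = o * 2 ^ v1 ∧ j = o * 2 ^ v1 + x) := by
  apply pdForm_of_reflect j i hi hij
  intro m h1 h2
  have h := congrArg (fun l => l[m - i]?) hpal.reverse_eq
  rw [List.getElem?_reverse (by simp; omega), List.getElem?_map, List.getElem?_map,
    List.getElem?_range (by simp), List.getElem?_range (by omega)] at h
  simp only [Option.map_some, Option.some.injEq, List.length_map, List.length_range] at h
  rw [show i + (j - i + 1 - 1 - (m - i)) = i + j - m by omega,
    show i + (m - i) = m by omega] at h
  exact h.symm
end

section
/- Let b(n) = ν₂(n) mod 2 denote the period-doubling sequence. Each of the following conditions on positive integers i ≤ j implies that the finite word (b(i), b(i+1), …, b(j)) is a palindrome: (1) i = o·2^v − x and j = o·2^v + x for some odd positive integer o, some v ≥ 1, and some x with 0 ≤ x < 2^v; (2) i = o·2^(v1) − x and j = o·2^(v1) + 2^(v2) + x for some odd positive integer o, some v1 > v2 ≥ 0 with v1 ≡ v2 (mod 2), and some x with 0 ≤ x < 2^(v2); (3) i = o·2^(v1) − 2^(v2) − x and j = o·2^(v1) + x for some odd positive integer o, some v1 > v2 ≥ 0 with v1 ≡ v2 (mod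 2), and some x with 0 ≤ x < 2^(v2). -/
/-!
Each word is indexed by an interval `[i, j]`, and it is a palindrome as soon as `b(p) = b(q)`
whenever `p + q = i + j`. In all three cases `i + j` is divisible by `2 ^ v` (respectively by
`2 ^ v2`), so `p ≡ -q` modulo that power of two; if the power does not divide `p`, then
`ν₂(p) = ν₂(q)` (`padicValNat_two_eq_of_dvd_add`).

The exceptional indices `p` are the multiples of that power lying in `[i, j]`, which is too short
to contain many. In the first case there is only the centre, where `p = q`. In the other two the
exceptional indices are `o * 2 ^ v1` and `o * 2 ^ v1 ± 2 ^ v2`, which are paired with each other;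
their valuations `v1` and `v2` have the same parity.
-/

theorem palindrome_map_range {f : ℕ → ℕ} {i j : ℕ} (hij : i ≤ j)
    (h : ∀ p q, i ≤ p → i ≤ q → p + q = i + j → f p = f q) :
    ((List.range (j - i + 1)).map fun t => f (i + t)).Palindrome := by
  apply List.Palindrome.of_reverse_eq
  apply List.ext_getElem
  · simp
  · intro n h1 h2
    simp only [List.length_map, List.length_range] at h2
    simp only [List.getElem_reverse, List.getElem_map, List.getElem_range, List.length_map,
      List.length_range]
    apply h <;> omega

theorem padicValNat_two_le_of_dvd_add {p q v : ℕ} (hp : p ≠ 0) (hq : q ≠ 0)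
    (h : 2 ^ v ∣ p + q) (hv : ¬ 2 ^ v ∣ p) : padicValNat 2 p ≤ padicValNat 2 q := by
  rw [padicValNat_dvd_iff_le hp, not_le] at hv
  rw [← padicValNat_dvd_iff_le hq]
  exact (Nat.dvd_add_right pow_padicValNat_dvd).1 ((pow_dvd_pow 2 hv.le).trans h)

theorem padicValNat_two_eq_of_dvd_add {p q v : ℕ} (hp : p ≠ 0) (hq : q ≠ 0)
    (h : 2 ^ v ∣ p + q) (hv : ¬ 2 ^ v ∣ p) : padicValNat 2 p = padicValNat 2 q :=
  le_antisymm (padicValNat_two_le_of_dvd_add hp hq h hv)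
    (padicValNat_two_le_of_dvd_add hq hp (by rwa [add_comm])
      fun hd => hv ((Nat.dvd_add_left hd).1 h))

theorem padicValNat_two_odd_mul_pow {o : ℕ} (ho : Odd o) (v : ℕ) :
    padicValNat 2 (o * 2 ^ v) = v := by
  rw [padicValNat.mul ho.pos.ne' (by positivity), padicValNat.prime_pow,
    padicValNat.eq_zero_of_not_dvd (by simpa [← even_iff_two_dvd] using ho), zero_add]

/-- Two multiples of `d` at distance less than `d` are equal. -/
theorem eq_of_dvd_of_near {d a b : ℕ} (ha : d ∣ a) (hb : d ∣ b) (h1 : a < b + d)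
    (h2 : b < a + d) : a = b := by
  obtain ⟨k, rfl⟩ := ha
  obtain ⟨l, rfl⟩ := hb
  have h3 : k < l + 1 := lt_of_mul_lt_mul_left (by rwa [mul_add_one]) (Nat.zero_le d)
  have h4 : l < k + 1 := lt_of_mul_lt_mul_left (by rwa [mul_add_one]) (Nat.zero_le d)
  rw [show k = l by omega]

/-- A palindrome condition for intervals centred at `c + 2 ^ v / 2`, where `c` and `c + 2 ^ v` are
the only multiples of `2 ^ v` they may contain. -/
theorem palindrome_between {i j c v x : ℕ} (hi : 0 < i) (hij : i ≤ j) (hx : x < 2 ^ v)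
    (hd : 2 ^ v ∣ c) (hic : i + x = c) (hjc : j = c + 2 ^ v + x)
    (hc : padicValNat 2 c % 2 = padicValNat 2 (c + 2 ^ v) % 2) :
    ((List.range (j - i + 1)).map fun t => padicValNat 2 (i + t) % 2).Palindrome := by
  refine palindrome_map_range (f := fun n => padicValNat 2 n % 2) hij fun p q hp hq hpq => ?_
  by_cases h : 2 ^ v ∣ p
  · have hd' : 2 ^ v ∣ c + 2 ^ v := hd.add (dvd_refl _)
    rcases le_or_gt (c + 2 ^ v) p with h1 | h1
    · have e : p = c + 2 ^ v := eq_of_dvd_of_near h hd' (by omega) (by omega)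
      have e' : q = c := by omega
      simp only [e, e', hc]
    · have e : p = c := eq_of_dvd_of_near h hd (by omega) (by omega)
      have e' : q = c + 2 ^ v := by omega
      simp only [e, e', hc]
  · have hs : 2 ^ v ∣ p + q := by
      rw [show p + q = c + c + 2 ^ v by omega]
      exact (hd.add hd).add (dvd_refl _)
    simp only [padicValNat_two_eq_of_dvd_add (by omega) (by omega) hs h]

/-- The paper's Lemma 3 (other direction): if positive integers `i ≤ j` satisfy one of the
three described conditions, then the factor `(b(i), b(i+1), …, b(j))` of the period-doubling
sequence `b(n) = ν₂(n) mod 2` is a palindrome. -/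
theorem pd_palindrome_of_cases (i j : ℕ) (hi : 0 < i) (hij : i ≤ j)
    (h : (∃ o v x : ℕ, Odd o ∧ 0 < o ∧ 1 ≤ v ∧ x < 2 ^ v ∧
        i + x = o * 2 ^ v ∧ j = o * 2 ^ v + x) ∨
      (∃ o v1 v2 x : ℕ, Odd o ∧ 0 < o ∧ v2 < v1 ∧ v1 % 2 = v2 % 2 ∧ x < 2 ^ v2 ∧
        i + x = o * 2 ^ v1 ∧ j = o * 2 ^ v1 + 2 ^ v2 + x) ∨
      (∃ o v1 v2 x : ℕ, Odd o ∧ 0 < o ∧ v2 < v1 ∧ v1 % 2 = v2 % 2 ∧ x < 2 ^ v2 ∧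
        i + 2 ^ v2 + x = o * 2 ^ v1 ∧ j = o * 2 ^ v1 + x)) :
    ((List.range (j - i + 1)).map fun t => padicValNat 2 (i + t) % 2).Palindrome := by
  rcases h with ⟨o, v, x, -, -, -, hx, h1, h2⟩ | ⟨o, v1, v2, x, ho, -, hv, hm, hx, h1, h2⟩ |
    ⟨o, v1, v2, x, ho, -, hv, hm, hx, h1, h2⟩
  · refine palindrome_map_range (f := fun n => padicValNat 2 n % 2) hij fun p q hp hq hpq => ?_
    have hd : 2 ^ v ∣ o * 2 ^ v := dvd_mul_left _ _
    by_cases h : 2 ^ v ∣ p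
    · have e : p = o * 2 ^ v := eq_of_dvd_of_near h hd (by omega) (by omega)
      rw [show p = q by omega]
    · have hs : 2 ^ v ∣ p + q := by
        rw [show p + q = o * 2 ^ v + o * 2 ^ v by omega]
        exact hd.add hd
      simp only [padicValNat_two_eq_of_dvd_add (by omega) (by omega) hs h]
  · refine palindrome_between hi hij hx ((pow_dvd_pow 2 hv.le).mul_left o) h1 h2 ?_
    obtain ⟨k, rfl⟩ := Nat.exists_eq_add_of_lt hv
    have e : o * 2 ^ (v2 + k + 1) + 2 ^ v2 = (2 * (o * 2 ^ k) + 1) * 2 ^ v2 := by ring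
    rw [e, padicValNat_two_odd_mul_pow ho, padicValNat_two_odd_mul_pow ⟨_, rfl⟩, hm]
  · obtain ⟨k, rfl⟩ := Nat.exists_eq_add_of_lt hv
    -- The smaller of the two exceptional indices is now `o * 2 ^ v1 - 2 ^ v2`, again an odd
    -- multiple of `2 ^ v2`, since `o * 2 ^ (v1 - v2)` is even and positive.
    obtain ⟨m, hm'⟩ : ∃ m, o * 2 ^ k = m + 1 :=
      Nat.exists_eq_add_one.2 (Nat.mul_pos ho.pos (by positivity))
    have e : o * 2 ^ (v2 + k + 1) = (2 * m + 1) * 2 ^ v2 + 2 ^ v2 := by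
      rw [show o * 2 ^ (v2 + k + 1) = 2 * (o * 2 ^ k) * 2 ^ v2 by ring, hm']
      ring
    refine palindrome_between (c := (2 * m + 1) * 2 ^ v2) hi hij hx (dvd_mul_left _ _)
      (by omega) (by omega) ?_
    rw [← e, padicValNat_two_odd_mul_pow ho, padicValNat_two_odd_mul_pow ⟨_, rfl⟩, hm]
end

section
/- Let n and n' be positive integers with n' ≤ n, and let b(m) = ν₂(m) mod 2 denote the period-doubling sequence. If the finite word (b(n'), b(n'+1), …, b(n)) is a palindrome, then either there exists a natural number v with n' − 1 = n XOR (2^(v+1) − 1), or there exist natural numbers v1 > v2 ≥ 0 with n' − 1 = n XOR (2^(v1+1) − 1 − 2^(v2)). (This is the arithmetic form of the paper's Proposition 4: every palindromic suffix-factor of the period-doubling sequence ending at position n arises from applying a masque operation of type A or of type B to the binary expansion of n.) -/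
/-!
Put `m = n' - 1`; the palindrome says `b x = b (m + n + 1 - x)` for `m < x ≤ n`, where
`b x = ν₂(x) mod 2`, so that `b` vanishes on odd numbers and `b (2 * y) = 1 - b y`.
The proof is a descent on `n`.

If `m` and `n` have opposite parity, the reflection `x ↦ m + n + 1 - x` preserves parity. Its
restriction to the even `x = 2 * y` is the same condition for the pair `(m / 2, n / 2)`, so a
mask `c` for the halves gives the mask `2 * c + 1` for `(m, n)`; this preserves both types of
mask. The descent ends when `m / 2 = n / 2`, with the mask `1`.

If `m` and `n` have equal parity, the reflection exchanges even and odd numbers, so `b` vanishes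
on the whole interval, which therefore contains no `x ≡ 2 mod 4`. Its length is even, hence
equal to `2`. Then `m / 2` and `n / 2` are consecutive, hence differ by a mask `2 ^ (v + 1) - 1`,
and doubling it gives a mask of type B with `v2 = 0`.
-/

theorem padicValNat_two_odd_mod (x : ℕ) (hx : x % 2 = 1) : padicValNat 2 x % 2 = 0 := by
  rw [padicValNat.eq_zero_of_not_dvd (by omega)]

theorem padicValNat_two_double (y : ℕ) (hy : 0 < y) :
    padicValNat 2 (2 * y) = padicValNat 2 y + 1 := by
  rw [padicValNat.mul (by norm_num) hy.ne', padicValNat_self, add_comm]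

/-- Prepending a lowest binary digit `d` to a mask `c`. -/
theorem eq_xor_of_half (a b c d : ℕ) (hd : d < 2) (h : a / 2 = (b / 2) ^^^ c)
    (hm : a % 2 = (b + d) % 2) : a = b ^^^ (2 * c + d) := by
  have h1 : (b ^^^ (2 * c + d)) / 2 = (b / 2) ^^^ c := by
    rw [Nat.xor_div_two]
    congr 1
    omega
  have h2 : (b ^^^ (2 * c + d)) % 2 = (b + d) % 2 := by
    rw [Nat.xor_mod_two_eq]
    omega
  omega

/-- Passing from `k + 1` to `k` flips the trailing zeros of `k + 1` and its lowest one. -/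
theorem exists_xor_pred (k : ℕ) : ∃ v : ℕ, k = (k + 1) ^^^ (2 ^ (v + 1) - 1) := by
  induction k using Nat.strong_induction_on with
  | _ k ih =>
    rcases Nat.even_or_odd' k with ⟨j, rfl | rfl⟩
    · refine ⟨0, ?_⟩
      apply eq_xor_of_half _ _ 0 1 (by norm_num)
      · rw [Nat.xor_zero]; omega
      · omega
    · obtain ⟨v, hv⟩ := ih j (by omega)
      refine ⟨v + 1, ?_⟩
      have hp : 0 < 2 ^ (v + 1) := by positivity
      have e : 2 ^ (v + 1 + 1) - 1 = 2 * (2 ^ (v + 1) - 1) + 1 := by rw [pow_succ 2 (v + 1)]; omega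
      rw [e]
      apply eq_xor_of_half _ _ _ 1 (by norm_num)
      · have e1 : (2 * j + 1) / 2 = j := by omega
        have e2 : (2 * j + 1 + 1) / 2 = j + 1 := by omega
        rw [e1, e2]; exact hv
      · omega

/-- The result in terms of `m = n' - 1`, with the palindrome condition stated pointwise. -/
theorem masque_of_reflection (n : ℕ) : ∀ m : ℕ, m < n →
    (∀ x y, m < x → m < y → x + y = m + n + 1 → padicValNat 2 x % 2 = padicValNat 2 y % 2) →
    (∃ v : ℕ, m = n ^^^ (2 ^ (v + 1) - 1)) ∨
    (∃ v1 v2 : ℕ, v2 < v1 ∧ m = n ^^^ (2 ^ (v1 + 1) - 1 - 2 ^ v2)) := by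
  induction n using Nat.strong_induction_on with
  | _ n ih =>
  intro m hmn H
  by_cases hpar : (m + n) % 2 = 1
  · rcases Nat.lt_or_ge (m / 2) (n / 2) with hlt | hge
    · have H' : ∀ x y, m / 2 < x → m / 2 < y → x + y = m / 2 + n / 2 + 1 →
          padicValNat 2 x % 2 = padicValNat 2 y % 2 := by
        intro x y hx hy hxy
        have := H (2 * x) (2 * y) (by omega) (by omega) (by omega)
        rw [padicValNat_two_double x (by omega), padicValNat_two_double y (by omega)] at this
        omega
      rcases ih (n / 2) (by omega) (m / 2) hlt H' with ⟨v, hv⟩ | ⟨v1, v2, hlt', hv⟩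
      · left
        refine ⟨v + 1, ?_⟩
        have hp : 0 < 2 ^ (v + 1) := by positivity
        have e : 2 ^ (v + 1 + 1) - 1 = 2 * (2 ^ (v + 1) - 1) + 1 := by
          rw [pow_succ 2 (v + 1)]; omega
        rw [e]
        exact eq_xor_of_half _ _ _ 1 (by norm_num) hv (by omega)
      · right
        refine ⟨v1 + 1, v2 + 1, by omega, ?_⟩
        have hp : 2 ^ v2 < 2 ^ (v1 + 1) := Nat.pow_lt_pow_right (by norm_num) (by omega)
        have e : 2 ^ (v1 + 1 + 1) - 1 - 2 ^ (v2 + 1)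
            = 2 * (2 ^ (v1 + 1) - 1 - 2 ^ v2) + 1 := by
          rw [pow_succ 2 (v1 + 1), pow_succ 2 v2]; omega
        rw [e]
        exact eq_xor_of_half _ _ _ 1 (by norm_num) hv (by omega)
    · left
      refine ⟨0, ?_⟩
      apply eq_xor_of_half _ _ 0 1 (by norm_num)
      · rw [Nat.xor_zero]; omega
      · omega
  · have hn : n = m + 2 := by
      by_contra hne
      -- The interval has length at least 4, so it contains some `4 * q + 2`, where `b` is `1`,
      -- while its mirror image is odd.
      obtain ⟨q, hq1, hq2⟩ : ∃ q, m < 4 * q + 2 ∧ 4 * q + 2 ≤ n :=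
        ⟨(m + 2) / 4, by omega, by omega⟩
      have := H (4 * q + 2) (m + n + 1 - (4 * q + 2)) hq1 (by omega) (by omega)
      rw [padicValNat_two_odd_mod (m + n + 1 - (4 * q + 2)) (by omega),
        show 4 * q + 2 = 2 * (2 * q + 1) by ring, padicValNat_two_double _ (by omega)] at this
      have := padicValNat_two_odd_mod (2 * q + 1) (by omega)
      omega
    right
    obtain ⟨v, hv⟩ := exists_xor_pred (m / 2)
    refine ⟨v + 1, 0, by omega, ?_⟩
    have e : 2 ^ (v + 1 + 1) - 1 - 2 ^ 0 = 2 * (2 ^ (v + 1) - 1) + 0 := by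
      rw [pow_succ 2 (v + 1)]; omega
    rw [e]
    apply eq_xor_of_half _ _ _ 0 (by norm_num)
    · rw [hn, show (m + 2) / 2 = m / 2 + 1 by omega]; exact hv
    · omega


/-- Arithmetic form of the paper's Proposition 4: for `1 ≤ n' ≤ n`, if the factor
`(b(n'), …, b(n))` of the period-doubling sequence `b(m) = ν₂(m) mod 2` is a palindrome,
then `n' - 1` arises from `n` by a masque operation of type A (XOR with `2 ^ (v+1) - 1`)
or of type B (XOR with `2 ^ (v1+1) - 1 - 2 ^ v2`, `v1 > v2`). -/
theorem pd_palindrome_masque (n n' : ℕ) (h1 : 0 < n') (h2 : n' ≤ n)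
    (hpal : ((List.range (n - n' + 1)).map fun t => padicValNat 2 (n' + t) % 2).Palindrome) :
    (∃ v : ℕ, n' - 1 = n ^^^ (2 ^ (v + 1) - 1)) ∨
    (∃ v1 v2 : ℕ, v2 < v1 ∧ n' - 1 = n ^^^ (2 ^ (v1 + 1) - 1 - 2 ^ v2)) := by
  apply masque_of_reflection n (n' - 1) (by omega)
  intro x y hx hy hxy
  have hr := hpal.reverse_eq
  have h3 := congrArg (fun l => l[x - n']?) hr
  rw [List.getElem?_reverse (by simp; omega)] at h3
  simp only [List.length_map, List.length_range, List.getElem?_map] at h3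
  rw [List.getElem?_range (by omega), List.getElem?_range (by omega)] at h3
  simp only [Option.map_some, Option.some.injEq] at h3
  rw [show n' + (n - n' + 1 - 1 - (x - n')) = y by omega,
    show n' + (x - n') = x by omega] at h3
  exact h3.symm
end
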